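/- arXiv:1806.00009 — 2 statements merged into one kernel-verified Lean document; each statement's English description precedes it below -/
import Mathlib

section
/- For every odd n, there is a bijection between the set of symmetric latin squares of order n and the set of symmetric latin squares f of order n+1 satisfying f(x,x) = n+1 for all x. Explicitly, given such an f of order n+1, the function g on {1,...,n}² defined by g(x,x) = f(x, n+1) and g(x,y) = f(x,y) for x ≠ y is a symmetric latin square of order n; and this map is a bijection. -/
/-- A latin square of order `n`: a binary operation invertible in each argument. -/
def IsLatin {n : ℕ} (f : Fin n → Fin n → Fin n) : Prop :=
  (∀ y, Function.Bijective fun x => f x y) ∧ (∀ x, Function.Bijective (f x))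

def IsSymmetric {n : ℕ} (f : Fin n → Fin n → Fin n) : Prop := ∀ x y, f x y = f y x

theorem IsSymmetric.isLatin {n : ℕ} {f : Fin n → Fin n → Fin n} (hs : IsSymmetric f)
    (hf : ∀ x, Function.Injective (f x)) : IsLatin f := by
  have hb : ∀ x, Function.Bijective (f x) := fun x => Finite.injective_iff_bijective.mp (hf x)
  refine ⟨fun y => ?_, hb⟩
  have h : (fun x => f x y) = f y := funext fun x => hs x y
  rw [h]
  exact hb y

/-- Each symbol `c` of a symmetric latin square defines an involution sending `x` to the column
of `c` in row `x`; in odd order it has a fixed point, so `c` occurs on the diagonal. -/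
theorem IsLatin.injective_diagonal {n : ℕ} (hn : Odd n) {g : Fin n → Fin n → Fin n}
    (hl : IsLatin g) (hs : IsSymmetric g) : Function.Injective fun x => g x x := by
  refine Finite.injective_iff_surjective.mpr fun c => ?_
  choose σ hσ using fun x => (hl.2 x).surjective c
  have hinv : Function.Involutive σ := fun x =>
    (hl.2 (σ x)).injective ((hσ (σ x)).trans ((hs (σ x) x).trans (hσ x)).symm)
  have hcard : ¬ 2 ∣ Fintype.card (Fin n) := by
    rw [Fintype.card_fin]
    exact hn.not_two_dvd_nat
  have hpow : hinv.toPerm ^ 2 ^ 1 = 1 := by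
    ext x
    simp [pow_two, hinv x]
  obtain ⟨x, hx⟩ := Equiv.Perm.exists_fixed_point_of_prime hcard hpow
  refine ⟨x, ?_⟩
  have hx' : σ x = x := hx
  simpa only [hx'] using hσ x

/-- Delete the last row and column, moving the last column to the diagonal. -/
def contractSquare {n : ℕ} (f : Fin (n + 1) → Fin (n + 1) → Fin (n + 1))
    (hl : IsLatin f) (hd : ∀ x, f x x = Fin.last n) (x y : Fin n) : Fin n :=
  (f x.castSucc (if x = y then Fin.last n else y.castSucc)).castPred <| by
    intro h
    have h' := (hl.2 _).injective (h.trans (hd x.castSucc).symm)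
    grind [Fin.castSucc_inj, Fin.castSucc_ne_last]

/-- Move the diagonal to a new last row and column, filling the diagonal with a new symbol. -/
def extendSquare {n : ℕ} (g : Fin n → Fin n → Fin n) (x y : Fin (n + 1)) : Fin (n + 1) :=
  Fin.lastCases
    (Fin.lastCases (Fin.last n) (fun j => (g j j).castSucc) y)
    (fun i => Fin.lastCases (g i i).castSucc
      (fun j => if i = j then Fin.last n else (g i j).castSucc) y) x

section extendSquare

variable {n : ℕ} (g : Fin n → Fin n → Fin n)

@[simp]
theorem extendSquare_last_last : extendSquare g (Fin.last n) (Fin.last n) = Fin.last n := by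
  simp [extendSquare]

@[simp]
theorem extendSquare_last_castSucc (j : Fin n) :
    extendSquare g (Fin.last n) j.castSucc = (g j j).castSucc := by
  simp [extendSquare]

@[simp]
theorem extendSquare_castSucc_last (i : Fin n) :
    extendSquare g i.castSucc (Fin.last n) = (g i i).castSucc := by
  simp [extendSquare]

@[simp]
theorem extendSquare_castSucc_castSucc (i j : Fin n) :
    extendSquare g i.castSucc j.castSucc =
      if i = j then Fin.last n else (g i j).castSucc := by
  simp [extendSquare]

theorem extendSquare_self (x : Fin (n + 1)) : extendSquare g x x = Fin.last n := by
  cases x using Fin.lastCases <;> simp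

variable {g}

theorem IsSymmetric.extendSquare (hs : IsSymmetric g) : IsSymmetric (extendSquare g) := by
  intro x y
  cases x using Fin.lastCases <;> cases y using Fin.lastCases <;> simp [eq_comm, hs _ _]

theorem IsLatin.extendSquare (hn : Odd n) (hl : IsLatin g) (hs : IsSymmetric g) :
    IsLatin (extendSquare g) := by
  refine hs.extendSquare.isLatin fun x y z h => ?_
  have hdiag := hl.injective_diagonal hn hs
  cases x using Fin.lastCases with
  | last =>
    cases y using Fin.lastCases <;> cases z using Fin.lastCases <;>
      simp only [extendSquare_last_last, extendSquare_last_castSucc] at h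
    all_goals grind [Fin.castSucc_inj, Fin.castSucc_ne_last, Function.Injective]
  | cast i =>
    have hrow := (hl.2 i).injective
    cases y using Fin.lastCases <;> cases z using Fin.lastCases <;>
      simp only [extendSquare_castSucc_last, extendSquare_castSucc_castSucc] at h
    all_goals grind [Fin.castSucc_inj, Fin.castSucc_ne_last, Function.Injective]

end extendSquare

section contractSquare

variable {n : ℕ} {f : Fin (n + 1) → Fin (n + 1) → Fin (n + 1)}
  (hl : IsLatin f) (hd : ∀ x, f x x = Fin.last n)

theorem castSucc_contractSquare (x y : Fin n) :
    (contractSquare f hl hd x y).castSucc =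
      f x.castSucc (if x = y then Fin.last n else y.castSucc) := by
  simp [contractSquare]

theorem IsSymmetric.contractSquare (hs : IsSymmetric f) :
    IsSymmetric (contractSquare f hl hd) := by
  intro x y
  obtain rfl | hxy := eq_or_ne x y
  · rfl
  · apply Fin.castSucc_injective
    simp [castSucc_contractSquare, hxy, hxy.symm, hs x.castSucc y.castSucc]

theorem IsLatin.contractSquare (hs : IsSymmetric f) : IsLatin (contractSquare f hl hd) := by
  refine (hs.contractSquare hl hd).isLatin fun x y z h => ?_
  have h' := congrArg Fin.castSucc h
  rw [castSucc_contractSquare, castSucc_contractSquare, (hl.2 _).injective.eq_iff] at h'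
  grind [Fin.castSucc_inj, Fin.castSucc_ne_last]

theorem extendSquare_contractSquare (hs : IsSymmetric f) :
    extendSquare (contractSquare f hl hd) = f := by
  funext x y
  cases x using Fin.lastCases <;> cases y using Fin.lastCases <;>
    simp [castSucc_contractSquare, hd, hs (Fin.last n)]
  grind

theorem contractSquare_extendSquare {g : Fin n → Fin n → Fin n} (hl : IsLatin (extendSquare g)) :
    contractSquare (extendSquare g) hl (extendSquare_self g) = g := by
  funext x y
  apply Fin.castSucc_injective
  rw [castSucc_contractSquare]
  split_ifs with h <;> simp [h]

end contractSquare

/-- For odd `n`, the symmetric latin squares `f` of order `n+1` with constant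
diagonal `f(x,x) = n+1` are in bijection with the symmetric latin squares of
order `n`, explicitly via `g(x,x) = f(x, n+1)` and `g(x,y) = f(x,y)` for `x ≠ y`. -/
theorem symmetric_latin_square_odd_bijection (n : ℕ) (hn : Odd n) :
    ∃ e : {f : Fin (n + 1) → Fin (n + 1) → Fin (n + 1) //
            IsLatin f ∧ IsSymmetric f ∧ ∀ x, f x x = Fin.last n} ≃
          {g : Fin n → Fin n → Fin n // IsLatin g ∧ IsSymmetric g},
      ∀ (f : {f : Fin (n + 1) → Fin (n + 1) → Fin (n + 1) //
            IsLatin f ∧ IsSymmetric f ∧ ∀ x, f x x = Fin.last n}) (x y : Fin n),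
        ((((e f).1 x y : Fin n) : ℕ) =
          if x = y then ((f.1 x.castSucc (Fin.last n) : Fin (n+1)) : ℕ)
          else ((f.1 x.castSucc y.castSucc : Fin (n+1)) : ℕ)) := by
  refine ⟨{
    toFun := fun f => ⟨contractSquare f.1 f.2.1 f.2.2.2,
      f.2.1.contractSquare f.2.2.2 f.2.2.1, f.2.2.1.contractSquare f.2.1 f.2.2.2⟩
    invFun := fun g => ⟨extendSquare g.1,
      g.2.1.extendSquare hn g.2.2, g.2.2.extendSquare, extendSquare_self g.1⟩
    left_inv := fun f => Subtype.ext (extendSquare_contractSquare f.2.1 f.2.2.2 f.2.2.1)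
    right_inv := fun g => Subtype.ext (contractSquare_extendSquare (g.2.1.extendSquare hn g.2.2)) },
    fun f x y => ?_⟩
  have h := congrArg Fin.val (castSucc_contractSquare f.2.1 f.2.2.2 x y)
  split_ifs with hxy <;> simpa [hxy] using h
end

section
/- Let B be a Steiner triple system of order v on points {1,...,v} and let D be a subspace of GF(3)^v containing the all-one vector, orthogonal to the characteristic vector of every block of B, with dim D = i+1. Let M be an (i+1) × v generator matrix for D whose first row is the all-one vector. Then M has exactly 3^i distinct columns, and each occurs exactly v/3^i times. In particular, 3^i divides v. -/
/-- A Steiner triple system. -/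
def IsSTS {V : Type*} [DecidableEq V] (B : Finset (Finset V)) : Prop :=
  (∀ b ∈ B, b.card = 3) ∧
  ∀ p : Finset V, p.card = 2 → ∃! b, b ∈ B ∧ p ⊆ b

/-- Vector spaces over `GF(3)` have exponent three. -/
theorem add_add_self_eq_zero_of_zmod_three {W : Type*} [AddCommGroup W] [Module (ZMod 3) W]
    (w : W) : w + w + w = 0 := by
  have h : (1 + 1 + 1 : ZMod 3) • w = 0 := by
    rw [show (1 + 1 + 1 : ZMod 3) = 0 by decide, zero_smul]
  simpa only [add_smul, one_smul] using h

/-- Two distinct points of a Steiner triple system lie in a block with a third point. -/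
theorem IsSTS.exists_third {V : Type*} [DecidableEq V] {B : Finset (Finset V)} (hB : IsSTS B)
    {p q : V} (hpq : p ≠ q) : ∃ r, r ≠ p ∧ r ≠ q ∧ {p, q, r} ∈ B := by
  obtain ⟨b, ⟨hb, hsub⟩, -⟩ := hB.2 {p, q} (Finset.card_pair hpq)
  have hcard : (b \ {p, q}).card = 1 := by
    rw [Finset.card_sdiff_of_subset hsub, hB.1 b hb, Finset.card_pair hpq]
  obtain ⟨r, hr⟩ := Finset.card_eq_one.mp hcard
  have hrmem : r ∈ b \ {p, q} := hr ▸ Finset.mem_singleton_self r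
  simp only [Finset.mem_sdiff, Finset.mem_insert, Finset.mem_singleton, not_or] at hrmem
  refine ⟨r, hrmem.2.1, hrmem.2.2, ?_⟩
  have hbeq : {p, q, r} = b := by
    ext x
    have hx := Finset.ext_iff.mp hr x
    have hs := @hsub x
    simp only [Finset.mem_sdiff, Finset.mem_insert, Finset.mem_singleton] at hx hs ⊢
    tauto
  exact hbeq ▸ hb

/-- Two points of a block determine the third one. -/
theorem IsSTS.third_unique {V : Type*} [DecidableEq V] {B : Finset (Finset V)} (hB : IsSTS B)
    {p q q' r : V} (hrp : r ≠ p) (hq'p : q' ≠ p) (hq'r : q' ≠ r)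
    (hb : {p, q, r} ∈ B) (hb' : {p, q', r} ∈ B) : q = q' := by
  have hpair : ∀ x : V, ({p, r} : Finset V) ⊆ {p, x, r} := by
    intro x y
    simp only [Finset.mem_insert, Finset.mem_singleton]
    tauto
  have heq := (hB.2 {p, r} (Finset.card_pair hrp.symm)).unique ⟨hb, hpair q⟩ ⟨hb', hpair q'⟩
  have hmem : q' ∈ ({p, q, r} : Finset V) := by simp [heq]
  simp only [Finset.mem_insert, Finset.mem_singleton] at hmem
  tauto

/-- If a labelling of the points of a Steiner triple system by vectors over `GF(3)` sums to zero
on blocks, then its set of values is closed under `(x, y) ↦ -x - y`. -/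
theorem IsSTS.exists_eq_neg_sub {V W : Type*} [DecidableEq V] [AddCommGroup W]
    [Module (ZMod 3) W] {B : Finset (Finset V)} (hB : IsSTS B) {f : V → W}
    (hsum : ∀ b ∈ B, ∑ j ∈ b, f j = 0) (x y : V) : ∃ z, f z = -f x - f y := by
  by_cases hxy : x = y
  · subst hxy
    refine ⟨x, ?_⟩
    rw [← sub_eq_zero, ← add_add_self_eq_zero_of_zmod_three (f x)]
    abel
  · obtain ⟨r, hrx, hry, hr⟩ := hB.exists_third hxy
    have h := hsum _ hr
    rw [Finset.sum_insert (by simp [hxy, hrx.symm]), Finset.sum_pair hry.symm] at h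
    refine ⟨r, ?_⟩
    rw [← sub_eq_zero, ← h]
    abel

/-- The fibres of a labelling of the points of a Steiner triple system by vectors over `GF(3)`
that sums to zero on blocks have equal size: any one of them injects into any other. -/
theorem IsSTS.card_fiber_le {V W : Type*} [Fintype V] [DecidableEq V] [AddCommGroup W]
    [Module (ZMod 3) W] [DecidableEq W] {B : Finset (Finset V)} (hB : IsSTS B) {f : V → W}
    (hsum : ∀ b ∈ B, ∑ j ∈ b, f j = 0) (x y : V) :
    (Finset.univ.filter fun j => f j = f x).card ≤
      (Finset.univ.filter fun j => f j = f y).card := by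
  by_cases hxy : f x = f y
  · rw [hxy]
  obtain ⟨z, hz⟩ := hB.exists_eq_neg_sub hsum x y
  have hne {q : V} (hq : f q = f x) : z ≠ q := by
    rintro rfl
    apply hxy
    rw [hz] at hq
    have h : f x - f y = (-f x - f y - f x) + (f x + f x + f x) := by abel
    rw [← sub_eq_zero, h, add_add_self_eq_zero_of_zmod_three (f x), hq, sub_self, zero_add]
  have hthird : ∀ q, z ≠ q → ∃ r, r ≠ z ∧ r ≠ q ∧ {z, q, r} ∈ B := fun q => hB.exists_third
  choose! T hTz hTq hTB using hthird
  refine Finset.card_le_card_of_injOn T ?_ ?_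
  · intro q hq
    simp only [Finset.coe_filter, Finset.mem_univ, true_and, Set.mem_ofPred_eq] at hq ⊢
    have hzq := hne hq
    have h := hsum _ (hTB q hzq)
    rw [Finset.sum_insert (by simp [hzq, (hTz q hzq).symm]),
      Finset.sum_pair (hTq q hzq).symm, hz, hq] at h
    rw [← sub_eq_zero, ← h]
    abel
  · intro q hq q' hq' heq
    simp only [Finset.coe_filter, Finset.mem_univ, true_and, Set.mem_ofPred_eq] at hq hq'
    have hzq := hne hq
    have hzq' := hne hq'
    have hb' := hTB q' hzq'
    rw [← heq] at hb'
    exact hB.third_unique (hTz q hzq) hzq'.symm (heq ▸ (hTq q' hzq').symm) (hTB q hzq) hb'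

/-- If the rows of `M` are independent and the first is all-one, a set of columns closed under
`(x, y) ↦ -x - y` consists of all vectors with first coordinate one. -/
theorem exists_column_eq {V : Type*} {i : ℕ} {M : Fin (i + 1) → V → ZMod 3}
    (hindep : LinearIndependent (ZMod 3) M) (hfirst : ∀ j, M 0 j = 1)
    (hmid : ∀ x y, ∃ z, (fun t => M t z) = -(fun t => M t x) - (fun t => M t y))
    {c : Fin (i + 1) → ZMod 3} (hc : c 0 = 1) : ∃ j, (fun t => M t j) = c := by
  obtain ⟨p⟩ : Nonempty V := by
    by_contra h
    rw [not_nonempty_iff] at h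
    exact hindep.ne_zero 0 (Subsingleton.elim _ _)
  set col : V → Fin (i + 1) → ZMod 3 := fun j t => M t j with hcol
  have hneg {w : Fin (i + 1) → ZMod 3} (hw : ∃ j, col j = col p + w) :
      ∃ j, col j = col p + -w := by
    obtain ⟨j, hj⟩ := hw
    obtain ⟨z, hz⟩ := hmid p j
    refine ⟨z, ?_⟩
    change col z = -col p - col j at hz
    rw [hz, hj, ← sub_eq_zero, ← neg_eq_zero, ← add_add_self_eq_zero_of_zmod_three (col p)]
    abel
  let S : AddSubgroup (Fin (i + 1) → ZMod 3) :=
    { carrier := {w | ∃ j, col j = col p + w}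
      zero_mem' := ⟨p, by simp⟩
      neg_mem' := hneg
      add_mem' := by
        rintro a b ⟨x, hx⟩ ⟨y, hy⟩
        obtain ⟨z, hz⟩ := hmid x y
        change col z = -col x - col y at hz
        rw [← neg_neg (a + b)]
        refine hneg ⟨z, ?_⟩
        rw [hz, hx, hy, ← sub_eq_zero, ← neg_eq_zero,
          ← add_add_self_eq_zero_of_zmod_three (col p)]
        abel }
  by_contra hno
  have hnotMem : c - col p ∉ AddSubgroup.toZModSubmodule 3 S := by
    rintro ⟨j, hj⟩
    exact hno ⟨j, by simpa using hj⟩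
  obtain ⟨f, hf, hker⟩ := Submodule.exists_le_ker_of_notMem hnotMem
  have hfcol (j : V) : f (col j) = f (col p) := by
    have h : col j - col p ∈ AddSubgroup.toZModSubmodule 3 S := ⟨j, by simp⟩
    have h' := hker h
    rwa [LinearMap.mem_ker, map_sub, sub_eq_zero] at h'
  have hf_apply (w : Fin (i + 1) → ZMod 3) : f w = ∑ t, f (Pi.single t 1) * w t := by
    rw [LinearMap.pi_apply_eq_sum_univ f w]
    refine Finset.sum_congr rfl fun t _ => ?_
    rw [smul_eq_mul, mul_comm]
    congr 2
    ext s
    simp [Pi.single_apply, eq_comm]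
  have hcoef := Fintype.linearIndependent_iff.mp hindep
    (fun t => f (Pi.single t 1) - if t = 0 then f (col p) else 0) (by
      ext j
      have h := hfcol j
      rw [hf_apply] at h
      simp only [Finset.sum_apply, Pi.smul_apply, smul_eq_mul, sub_mul, Finset.sum_sub_distrib]
      rw [show ∑ t, f (Pi.single t 1) * M t j = f (col p) from h]
      simp [hfirst])
  apply hf
  rw [map_sub, sub_eq_zero, hf_apply c]
  simp_rw [fun t => sub_eq_zero.mp (hcoef t)]
  simp [hc]

/-- If `D ≤ GF(3)^v` contains the all-one vector, is orthogonal to all blocks of an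
STS(v) `B`, and has dimension `i+1`, then a generator matrix `M` of `D` whose first
row is the all-one vector has exactly `3^i` distinct columns, each occurring
`v/3^i` times; in particular `3^i ∣ v`. -/
theorem dual_generator_matrix_columns_gf3 (v i : ℕ)
    (B : Finset (Finset (Fin v))) (hB : IsSTS B)
    (M : Fin (i + 1) → Fin v → ZMod 3)
    (hindep : LinearIndependent (ZMod 3) M)
    (hfirst : ∀ j, M 0 j = 1)
    (horth : ∀ t : Fin (i + 1), ∀ b ∈ B, ∑ j ∈ b, M t j = 0) :
    3 ^ i ∣ v ∧
    (Finset.univ.image (fun j : Fin v => fun t => M t j)).card = 3 ^ i ∧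
    ∀ c ∈ Finset.univ.image (fun j : Fin v => fun t => M t j),
      (Finset.univ.filter (fun j : Fin v => (fun t => M t j) = c)).card = v / 3 ^ i := by
  set col : Fin v → Fin (i + 1) → ZMod 3 := fun j t => M t j with hcol
  have hsum : ∀ b ∈ B, ∑ j ∈ b, col j = 0 := by
    intro b hb
    ext t
    simpa [hcol] using horth t b hb
  have himage : Finset.univ.image col =
      Finset.univ.image (Fin.cons (α := fun _ : Fin (i + 1) => ZMod 3) 1) := by
    ext c
    simp only [Finset.mem_image, Finset.mem_univ, true_and]
    constructor
    · rintro ⟨j, rfl⟩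
      refine ⟨Fin.tail (col j), ?_⟩
      conv_rhs => rw [← Fin.cons_self_tail (col j)]
      rw [show col j 0 = 1 from hfirst j]
    · rintro ⟨d, rfl⟩
      exact exists_column_eq hindep hfirst (hB.exists_eq_neg_sub hsum) (Fin.cons_zero _ _)
  have hcard : (Finset.univ.image col).card = 3 ^ i := by
    rw [himage, Finset.card_image_of_injective _ (Fin.cons_right_injective _)]
    simp [ZMod.card]
  have hmul (x : Fin v) : v = 3 ^ i * (Finset.univ.filter fun j => col j = col x).card := by
    have h := Finset.card_eq_sum_card_image col Finset.univ
    rw [Finset.sum_const_nat (m := (Finset.univ.filter fun j => col j = col x).card), hcard,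
      Finset.card_univ, Fintype.card_fin] at h
    · exact h
    · intro c hc
      obtain ⟨y, -, rfl⟩ := Finset.mem_image.mp hc
      exact le_antisymm (hB.card_fiber_le hsum y x) (hB.card_fiber_le hsum x y)
  refine ⟨?_, hcard, ?_⟩
  · obtain ⟨c, hc⟩ : (Finset.univ.image col).Nonempty := by
      rw [← Finset.card_pos, hcard]
      positivity
    obtain ⟨x, -, -⟩ := Finset.mem_image.mp hc
    exact ⟨_, hmul x⟩
  · intro c hc
    obtain ⟨x, -, rfl⟩ := Finset.mem_image.mp hc
    exact (Nat.div_eq_of_eq_mul_right (by positivity) (hmul x)).symm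
end
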